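/- For every integer n ≥ 1, T(3, n+1) = N(n) + 2·A_1(n) + 2·A_2(n) + A_3(n) + A_5(n), where: A_j(n) is the number of Dyck paths of semilength n with height at most j; and N(n) is the number of ordered triples (P, Q, R) of ballot paths whose total number of steps is 2n − 1, such that P ends at level 4, Q ends at level 3, R ends at level 2, and the heights satisfy h(Q) = h(P) − 2 and h(R) = h(P) − 4. -/

import Mathlib

/-- A ballot path: a sequence of steps, each `+1` or `-1`, all of whose
partial sums are nonnegative. -/
def IsBallot (P : List ℤ) : Prop :=
  (∀ s ∈ P, s = 1 ∨ s = -1) ∧ ∀ k, 0 ≤ (P.take k).sum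

/-- A Dyck path of semilength `n`: a ballot path with `2n` steps ending at level `0`. -/
def IsDyck (n : ℕ) (P : List ℤ) : Prop :=
  IsBallot P ∧ P.length = 2 * n ∧ P.sum = 0

/-- The height of a path: the maximum of its partial sums (`0` for the empty path). -/
def pathHeight (P : List ℤ) : ℤ :=
  (((List.range (P.length + 1)).map fun k => (P.take k).sum).foldr max 0)

/-- The super Catalan number `T(m,n) = (1/2) * (2m)! * (2n)! / (m! * n! * (m+n)!)`,
as a rational number. -/
def superCatalan (m n : ℕ) : ℚ :=
  (Nat.factorial (2 * m) * Nat.factorial (2 * n) : ℚ) /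
    (2 * (Nat.factorial m * Nat.factorial n * Nat.factorial (m + n)))

/-- `A j n` is the number of Dyck paths of semilength `n` with height at most `j`. -/
noncomputable def A (j n : ℕ) : ℕ :=
  Nat.card {P : List ℤ // IsDyck n P ∧ pathHeight P ≤ (j : ℤ)}

/-- `N3 n` is the number of ordered triples `(P, Q, R)` of ballot paths with
`2n - 1` steps in total, with `P` ending at level `4`, `Q` at level `3`, `R` at
level `2`, and heights satisfying `h(Q) = h(P) - 2` and `h(R) = h(P) - 4`. -/
noncomputable def N3 (n : ℕ) : ℕ :=
  Nat.card {T : List ℤ × List ℤ × List ℤ //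
    IsBallot T.1 ∧ IsBallot T.2.1 ∧ IsBallot T.2.2 ∧
    T.1.length + T.2.1.length + T.2.2.length = 2 * n - 1 ∧
    T.1.sum = 4 ∧ T.2.1.sum = 3 ∧ T.2.2.sum = 2 ∧
    pathHeight T.2.1 = pathHeight T.1 - 2 ∧
    pathHeight T.2.2 = pathHeight T.1 - 4}

open PowerSeries in
/-- Catalan series in `X^2`. -/
noncomputable def cS : PowerSeries ℚ :=
  PowerSeries.expand 2 two_ne_zero (PowerSeries.map (Nat.castRingHom ℚ) PowerSeries.catalanSeries)

open PowerSeries in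
lemma cS_eq : cS = 1 + X ^ 2 * cS ^ 2 := by
  have h := congrArg (fun f => PowerSeries.expand 2 two_ne_zero
    (PowerSeries.map (Nat.castRingHom ℚ) f)) PowerSeries.catalanSeries_sq_mul_X_add_one
  simp only [map_add, map_mul, map_pow, map_one, PowerSeries.map_X, PowerSeries.expand_X] at h
  unfold cS
  linear_combination -h

lemma cS_coeff (n : ℕ) : PowerSeries.coeff (2 * n) cS = (catalan n : ℚ) := by
  unfold cS
  rw [PowerSeries.coeff_expand_mul]
  simp

noncomputable def qS : PowerSeries ℚ := PowerSeries.X ^ 2 * cS ^ 2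

lemma cS_q : cS = 1 + qS := cS_eq

lemma X_ne : (PowerSeries.X : PowerSeries ℚ) ≠ 0 := PowerSeries.X_ne_zero

lemma cS_ne : cS ≠ 0 := by
  intro h
  have := cS_coeff 0
  rw [h] at this
  simp at this

lemma qS_ne : qS ≠ 0 := mul_ne_zero (pow_ne_zero _ X_ne) (pow_ne_zero _ cS_ne)

lemma qS_const : PowerSeries.constantCoeff qS = 0 := by
  simp [qS]

noncomputable def eS (k : ℕ) : PowerSeries ℚ := (1 - qS ^ k)⁻¹

lemma eS_mul (k : ℕ) (hk : k ≠ 0) : eS k * (1 - qS ^ k) = 1 := by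
  unfold eS
  apply PowerSeries.inv_mul_cancel
  simp [qS_const, hk]

lemma one_sub_ne (k : ℕ) (hk : k ≠ 0) : (1 - qS ^ k) ≠ 0 := by
  intro h
  have := eS_mul k hk
  rw [h] at this
  simp at this

/-- coefficient identity for the super Catalan numbers -/
lemma coeff_G (n : ℕ) :
    PowerSeries.coeff (2 * n) (cS ^ 4 - 6 * cS ^ 3 + 10 * cS ^ 2) = superCatalan 3 (n + 1) := by
  have hX : (cS ^ 4 - 6 * cS ^ 3 + 10 * cS ^ 2) * PowerSeries.X ^ 6
      = PowerSeries.C 16 * (cS * PowerSeries.X ^ 4) - PowerSeries.C 8 * (cS * PowerSeries.X ^ 2)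
        + cS - 1 + PowerSeries.C 7 * PowerSeries.X ^ 2 - PowerSeries.C 10 * PowerSeries.X ^ 4 := by
    have h := cS_eq
    simp only [map_ofNat]
    generalize cS = c at *
    generalize (PowerSeries.X : PowerSeries ℚ) = x at *
    have e2 : c ^ 2 * x ^ 2 = c - 1 := by linear_combination -h
    have e3 : c ^ 3 * x ^ 4 = c - 1 - c * x ^ 2 := by
      linear_combination (c * x ^ 2 + 1) * e2
    have e4 : c ^ 4 * x ^ 6 = c - 1 - 2 * c * x ^ 2 + x ^ 2 := by
      linear_combination (c ^ 2 * x ^ 4) * e2 + e3 - x ^ 2 * e2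
    linear_combination e4 - 6 * x ^ 2 * e3 + 10 * x ^ 4 * e2
  have h2 := congrArg (PowerSeries.coeff (2 * n + 6)) hX
  rw [PowerSeries.coeff_mul_X_pow] at h2
  rw [h2]
  have c1 : PowerSeries.coeff (2 * n + 6) (cS * PowerSeries.X ^ 4) = (catalan (n + 1) : ℚ) := by
    rw [← cS_coeff, show 2 * n + 6 = 2 * (n + 1) + 4 by ring, PowerSeries.coeff_mul_X_pow]
  have c2 : PowerSeries.coeff (2 * n + 6) (cS * PowerSeries.X ^ 2) = (catalan (n + 2) : ℚ) := by
    rw [← cS_coeff, show 2 * n + 6 = 2 * (n + 2) + 2 by ring, PowerSeries.coeff_mul_X_pow]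
  have c3 : PowerSeries.coeff (2 * n + 6) cS = (catalan (n + 3) : ℚ) := by
    rw [← cS_coeff, show 2 * n + 6 = 2 * (n + 3) by ring]
  simp only [map_add, map_sub, PowerSeries.coeff_C_mul, c1, c2, c3, PowerSeries.coeff_one,
    PowerSeries.coeff_X_pow]
  have fac : ∀ m : ℕ, (catalan m : ℚ) * (m.factorial * (m + 1).factorial) = (2 * m).factorial := by
    intro m
    have h1 : (m + 1) * catalan m = m.centralBinom := by
      rw [catalan_eq_centralBinom_div]
      exact Nat.mul_div_cancel' (Nat.succ_dvd_centralBinom m)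
    have h2 : m.centralBinom * m.factorial * m.factorial = (2 * m).factorial := by
      have := Nat.choose_mul_factorial_mul_factorial (show m ≤ 2 * m by omega)
      rw [show 2 * m - m = m by omega] at this
      exact this
    rw [← h2, ← h1, Nat.factorial_succ]
    push_cast
    ring
  have f1 := fac (n + 1)
  have f2 := fac (n + 2)
  have f3 := fac (n + 3)
  unfold superCatalan
  rw [show 2 * (n + 3) = 2 * n + 6 by ring, show n + 3 + 1 = n + 4 by ring] at f3
  rw [show 2 * (n + 2) = 2 * n + 4 by ring, show n + 2 + 1 = n + 3 by ring] at f2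
  rw [show 2 * (n + 1) = 2 * n + 2 by ring, show n + 1 + 1 = n + 2 by ring] at f1
  rw [show 3 + (n + 1) = n + 4 by ring, show 2 * (n + 1) = 2 * n + 2 by ring]
  have e1 : (catalan (n + 1) : ℚ) = (2 * n + 2).factorial / ((n + 1).factorial * (n + 2).factorial) := by
    rw [eq_div_iff (by positivity)]; exact f1
  have e2 : (catalan (n + 2) : ℚ) = (2 * n + 4).factorial / ((n + 2).factorial * (n + 3).factorial) := by
    rw [eq_div_iff (by positivity)]; exact f2
  have e3 : (catalan (n + 3) : ℚ) = (2 * n + 6).factorial / ((n + 3).factorial * (n + 4).factorial) := by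
    rw [eq_div_iff (by positivity)]; exact f3
  rw [e1, e2, e3]
  have z1 : ¬ (2 * n + 6 = 0) := by omega
  have z2 : ¬ (2 * n + 6 = 2) := by omega
  have z3 : ¬ (2 * n + 6 = 4) := by omega
  simp only [z1, z2, z3, if_false]
  have hp : ((n + 1).factorial : ℚ) ≠ 0 := by positivity
  simp only [show n + 4 = n + 1 + 1 + 1 + 1 by ring, show n + 3 = n + 1 + 1 + 1 by ring,
    show n + 2 = n + 1 + 1 by ring,
    show 2 * n + 6 = 2 * n + 2 + 1 + 1 + 1 + 1 by ring,
    show 2 * n + 4 = 2 * n + 2 + 1 + 1 by ring]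
  rw [show Nat.factorial (2 * 3) = 720 by rfl, show Nat.factorial 3 = 6 by rfl]
  simp only [Nat.factorial_succ (n + 1), Nat.factorial_succ (n + 1 + 1),
    Nat.factorial_succ (n + 1 + 1 + 1),
    Nat.factorial_succ (2 * n + 2), Nat.factorial_succ (2 * n + 2 + 1),
    Nat.factorial_succ (2 * n + 2 + 1 + 1), Nat.factorial_succ (2 * n + 2 + 1 + 1 + 1)]
  generalize (n + 1).factorial = a at *
  generalize (2 * n + 2).factorial = b at *
  push_cast
  field_simp
  ring

lemma tele (q y e0 e1 e2 e3 e4 e5 : PowerSeries ℚ)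
    (h0 : e0 * (1 - y) = 1) (h5 : e5 * (1 - q ^ 5 * y) = 1) :
    (q ^ 3 * (1 - q ^ 3) * (1 + q ^ 2) * (1 + q + q ^ 2 + q ^ 3 + q ^ 4)) * y ^ 3
      * (e0 * e1 * e2 * e3 * e4 * e5)
    = (1 - (1 + q + q ^ 2 + q ^ 3 + q ^ 4) * y
        + q * (1 + q ^ 2) * (1 + q + q ^ 2 + q ^ 3 + q ^ 4) * y ^ 2) * (e0 * e1 * e2 * e3 * e4)
      - (1 - (1 + q + q ^ 2 + q ^ 3 + q ^ 4) * (q * y)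
        + q * (1 + q ^ 2) * (1 + q + q ^ 2 + q ^ 3 + q ^ 4) * (q * y) ^ 2)
          * (e1 * e2 * e3 * e4 * e5) := by
  linear_combination (1 - (1 + q + q ^ 2 + q ^ 3 + q ^ 4) * y
        + q * (1 + q ^ 2) * (1 + q + q ^ 2 + q ^ 3 + q ^ 4) * y ^ 2) * (e0 * e1 * e2 * e3 * e4) * h5
      - (1 - (1 + q + q ^ 2 + q ^ 3 + q ^ 4) * (q * y)
        + q * (1 + q ^ 2) * (1 + q + q ^ 2 + q ^ 3 + q ^ 4) * (q * y) ^ 2)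
          * (e1 * e2 * e3 * e4 * e5) * h0

noncomputable def gS (y : PowerSeries ℚ) : PowerSeries ℚ :=
  1 - (1 + qS + qS ^ 2 + qS ^ 3 + qS ^ 4) * y
        + qS * (1 + qS ^ 2) * (1 + qS + qS ^ 2 + qS ^ 3 + qS ^ 4) * y ^ 2

noncomputable def tS (k : ℕ) : PowerSeries ℚ :=
  (1 + qS) ^ 2 * qS ^ (3 * k + 8) * (1 - qS) ^ 3 * (1 - qS ^ 3) * (1 - qS ^ 4) * (1 - qS ^ 5)
    * (eS (k + 3) * eS (k + 4) * eS (k + 5) * eS (k + 6) * eS (k + 7) * eS (k + 8))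

lemma tS_sum (K : ℕ) : qS ^ 4 * ∑ k ∈ Finset.range K, tS k =
    (1 - qS) ^ 5 * (1 + qS) ^ 3 *
      (gS (qS ^ 3) * (eS 3 * eS 4 * eS 5 * eS 6 * eS 7)
        - gS (qS ^ (K + 3)) * (eS (K + 3) * eS (K + 4) * eS (K + 5) * eS (K + 6) * eS (K + 7))) := by
  induction K with
  | zero => simp
  | succ K ih =>
    rw [Finset.sum_range_succ, mul_add, ih]
    have h := tele qS (qS ^ (K + 3)) (eS (K + 3)) (eS (K + 4)) (eS (K + 5)) (eS (K + 6))
      (eS (K + 7)) (eS (K + 8)) (eS_mul _ (by omega))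
      (by rw [← pow_add, show 5 + (K + 3) = K + 8 by omega]; exact eS_mul _ (by omega))
    have e : K + 1 + 3 = K + 4 := by omega
    simp only [show K + 1 + 3 = K + 4 by omega, show K + 1 + 4 = K + 5 by omega,
      show K + 1 + 5 = K + 6 by omega, show K + 1 + 6 = K + 7 by omega,
      show K + 1 + 7 = K + 8 by omega]
    have hq : qS * qS ^ (K + 3) = qS ^ (K + 4) := by ring
    rw [hq] at h
    unfold tS gS
    linear_combination (1 - qS) ^ 5 * (1 + qS) ^ 3 * h

lemma fin_id (W1 W2 W3 W5 : PowerSeries ℚ)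
    (h1 : W1 * (1 - qS ^ 3) = (1 + qS) * (1 - qS ^ 2))
    (h2 : W2 * (1 - qS ^ 4) = (1 + qS) * (1 - qS ^ 3))
    (h3 : W3 * (1 - qS ^ 5) = (1 + qS) * (1 - qS ^ 4))
    (h5 : W5 * (1 - qS ^ 7) = (1 + qS) * (1 - qS ^ 6)) :
    qS ^ 4 * (cS ^ 4 - 6 * cS ^ 3 + 10 * cS ^ 2 + 1 - 2 * W1 - 2 * W2 - W3 - W5)
     = (1 - qS) ^ 5 * (1 + qS) ^ 3 *
      (gS (qS ^ 3) * (eS 3 * eS 4 * eS 5 * eS 6 * eS 7) - 1) := by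
  have hE : (eS 3 * eS 4 * eS 5 * eS 6 * eS 7) * ((1 - qS ^ 3) * (1 - qS ^ 4) * (1 - qS ^ 5) *
      (1 - qS ^ 6) * (1 - qS ^ 7)) = 1 := by
    calc _ = (eS 3 * (1 - qS ^ 3)) * (eS 4 * (1 - qS ^ 4)) * (eS 5 * (1 - qS ^ 5)) *
          (eS 6 * (1 - qS ^ 6)) * (eS 7 * (1 - qS ^ 7)) := by ring
      _ = 1 := by simp [eS_mul]
  have hP : ((1 - qS ^ 3) * (1 - qS ^ 4) * (1 - qS ^ 5) * (1 - qS ^ 6) * (1 - qS ^ 7)) ≠ 0 := by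
    intro h
    rw [h] at hE
    simp at hE
  apply mul_left_cancel₀ hP
  rw [cS_q]
  generalize eS 3 * eS 4 * eS 5 * eS 6 * eS 7 = E at *
  unfold gS
  generalize qS = q at *
  linear_combination (-2 * q ^ 4 * (1 - q ^ 4) * (1 - q ^ 5) * (1 - q ^ 6) * (1 - q ^ 7)) * h1
   + (-2 * q ^ 4 * (1 - q ^ 3) * (1 - q ^ 5) * (1 - q ^ 6) * (1 - q ^ 7)) * h2
   + (- q ^ 4 * (1 - q ^ 3) * (1 - q ^ 4) * (1 - q ^ 6) * (1 - q ^ 7)) * h3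
   + (- q ^ 4 * (1 - q ^ 3) * (1 - q ^ 4) * (1 - q ^ 5) * (1 - q ^ 6)) * h5
   - (1 - q) ^ 5 * (1 + q) ^ 3 * (1 - (1 + q + q ^ 2 + q ^ 3 + q ^ 4) * q ^ 3
        + q * (1 + q ^ 2) * (1 + q + q ^ 2 + q ^ 3 + q ^ 4) * (q ^ 3) ^ 2) * hE

lemma g_dvd (m : ℕ) (hm : m ≠ 0) :
    qS ^ m ∣ gS (qS ^ m) * (eS m * eS (m + 1) * eS (m + 2) * eS (m + 3) * eS (m + 4)) - 1 := by
  have hE : (eS m * eS (m + 1) * eS (m + 2) * eS (m + 3) * eS (m + 4)) *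
      ((1 - qS ^ m) * (1 - qS ^ (m + 1)) * (1 - qS ^ (m + 2)) *
      (1 - qS ^ (m + 3)) * (1 - qS ^ (m + 4))) = 1 := by
    calc _ = (eS m * (1 - qS ^ m)) * (eS (m + 1) * (1 - qS ^ (m + 1))) *
          (eS (m + 2) * (1 - qS ^ (m + 2))) *
          (eS (m + 3) * (1 - qS ^ (m + 3))) * (eS (m + 4) * (1 - qS ^ (m + 4))) := by ring
      _ = 1 := by simp [eS_mul, hm]
  generalize eS m * eS (m + 1) * eS (m + 2) * eS (m + 3) * eS (m + 4) = E at *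
  rw [show gS (qS ^ m) * E - 1 = (gS (qS ^ m) - ((1 - qS ^ m) * (1 - qS ^ (m + 1)) *
    (1 - qS ^ (m + 2)) * (1 - qS ^ (m + 3)) * (1 - qS ^ (m + 4)))) * E by
      linear_combination hE]
  apply Dvd.dvd.mul_right
  unfold gS
  simp only [pow_add qS m]
  generalize qS ^ m = y
  rw [← Ideal.mem_span_singleton, ← Ideal.Quotient.eq]
  have hy : (Ideal.Quotient.mk (Ideal.span {y})) y = 0 := by
    rw [Ideal.Quotient.eq_zero_iff_mem]; exact Ideal.mem_span_singleton_self y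
  simp [hy]

lemma series_dvd (K : ℕ) (W1 W2 W3 W5 : PowerSeries ℚ)
    (h1 : W1 * (1 - qS ^ 3) = (1 + qS) * (1 - qS ^ 2))
    (h2 : W2 * (1 - qS ^ 4) = (1 + qS) * (1 - qS ^ 3))
    (h3 : W3 * (1 - qS ^ 5) = (1 + qS) * (1 - qS ^ 4))
    (h5 : W5 * (1 - qS ^ 7) = (1 + qS) * (1 - qS ^ 6)) :
    (PowerSeries.X : PowerSeries ℚ) ^ (2 * K) ∣
      cS ^ 4 - 6 * cS ^ 3 + 10 * cS ^ 2 + 1 - 2 * W1 - 2 * W2 - W3 - W5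
        - ∑ k ∈ Finset.range (K + 1), tS k := by
  have hd : qS ^ K ∣ cS ^ 4 - 6 * cS ^ 3 + 10 * cS ^ 2 + 1 - 2 * W1 - 2 * W2 - W3 - W5
        - ∑ k ∈ Finset.range (K + 1), tS k := by
    obtain ⟨S, hS⟩ := g_dvd (K + 1 + 3) (by omega)
    refine ⟨(1 - qS) ^ 5 * (1 + qS) ^ 3 * S, ?_⟩
    apply mul_left_cancel₀ (pow_ne_zero 4 qS_ne)
    have ha := fin_id W1 W2 W3 W5 h1 h2 h3 h5
    have hb := tS_sum (K + 1)
    simp only [add_assoc] at hS hb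
    norm_num at hS hb
    linear_combination ha - hb + (1 - qS) ^ 5 * (1 + qS) ^ 3 * hS
  refine dvd_trans ?_ hd
  rw [qS, mul_pow, ← pow_mul]
  exact Dvd.intro _ rfl
def Good (h : ℕ) (P : List ℤ) : Prop :=
  (∀ s ∈ P, s = 1 ∨ s = -1) ∧ ∀ k, 0 ≤ (P.take k).sum ∧ (P.take k).sum ≤ (h : ℤ)

lemma foldr_max_le (l : List ℤ) (b : ℤ) (hb : 0 ≤ b) :
    l.foldr max 0 ≤ b ↔ ∀ x ∈ l, x ≤ b := by
  induction l with
  | nil => simpa using hb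
  | cons a l ih => simp [ih]

lemma height_le (P : List ℤ) (b : ℤ) (hb : 0 ≤ b) :
    pathHeight P ≤ b ↔ ∀ k, (P.take k).sum ≤ b := by
  unfold pathHeight
  rw [foldr_max_le _ _ hb]
  simp only [List.mem_map, List.mem_range, forall_exists_index, and_imp,
    forall_apply_eq_imp_iff₂]
  constructor
  · intro h k
    by_cases hk : k < P.length + 1
    · exact h k hk
    · have := h P.length (by omega)
      rw [List.take_of_length_le (by omega)]
      simpa using this
  · intro h k _
    exact h k

lemma height_nonneg (P : List ℤ) : 0 ≤ pathHeight P := by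
  unfold pathHeight
  generalize (List.map (fun k => (List.take k P).sum) (List.range (P.length + 1))) = l
  induction l with
  | nil => simp
  | cons a l ih => simp [ih]

lemma sum_le_height (P : List ℤ) (k : ℕ) : (P.take k).sum ≤ pathHeight P :=
  (height_le P _ (height_nonneg P)).1 le_rfl k

lemma sum_le_height' (P : List ℤ) : P.sum ≤ pathHeight P := by
  simpa using sum_le_height P P.length

lemma good_iff (h : ℕ) (P : List ℤ) : Good h P ↔ IsBallot P ∧ pathHeight P ≤ (h : ℤ) := by
  rw [height_le _ _ (by positivity)]
  unfold Good IsBallot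
  constructor
  · rintro ⟨a, b⟩
    exact ⟨⟨a, fun k => (b k).1⟩, fun k => (b k).2⟩
  · rintro ⟨⟨a, b⟩, c⟩
    exact ⟨a, fun k => ⟨b k, c k⟩⟩

lemma steps_sum_le (P : List ℤ) (h : ∀ s ∈ P, s = 1 ∨ s = -1) : P.sum ≤ P.length := by
  induction P with
  | nil => simp
  | cons a l ih =>
    have h1 := ih (fun s hs => h s (by simp [hs]))
    have h2 := h a (by simp)
    simp only [List.sum_cons, List.length_cons]
    push_cast
    omega

lemma height_le_length (P : List ℤ) (h : IsBallot P) : pathHeight P ≤ P.length := by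
  rw [height_le _ _ (by positivity)]
  intro k
  have := steps_sum_le (P.take k) (fun s hs => h.1 s (List.mem_of_mem_take hs))
  have h2 : (P.take k).length ≤ P.length := by simp
  omega

lemma good_concat (h : ℕ) (P : List ℤ) (s : ℤ) :
    Good h (P ++ [s]) ↔ Good h P ∧ (s = 1 ∨ s = -1) ∧ 0 ≤ P.sum + s ∧ P.sum + s ≤ h := by
  unfold Good
  constructor
  · rintro ⟨a, b⟩
    refine ⟨⟨fun x hx => a x (by simp [hx]), fun k => ?_⟩, a s (by simp), ?_⟩
    · have := b (min k P.length)
      rw [List.take_append_of_le_length (by omega)] at this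
      rcases le_total k P.length with hk | hk
      · rwa [min_eq_left hk] at this
      · rw [min_eq_right hk] at this
        rw [List.take_of_length_le hk]
        simpa using this
    · have := b (P.length + 1)
      rw [List.take_of_length_le (by simp)] at this
      simpa using this
  · rintro ⟨⟨a, b⟩, c, d⟩
    refine ⟨fun x hx => ?_, fun k => ?_⟩
    · rcases List.mem_append.1 hx with hx | hx
      · exact a x hx
      · simp at hx; subst hx; exact c
    · rcases le_or_gt k P.length with hk | hk
      · rw [List.take_append_of_le_length hk]; exact b k
      · rw [List.take_of_length_le (by simp; omega)]
        simpa using d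

def pths (h : ℕ) : ℕ → ℕ → Finset (List ℤ)
  | 0, 0 => {[]}
  | 0, _ + 1 => ∅
  | n + 1, 0 => (pths h n 1).image (fun P => P ++ [-1])
  | n + 1, j + 1 => if j + 1 ≤ h then
      (pths h n j).image (fun P => P ++ [1]) ∪ (pths h n (j + 2)).image (fun P => P ++ [-1])
      else ∅

lemma mem_pths (h n j : ℕ) (P : List ℤ) :
    P ∈ pths h n j ↔ Good h P ∧ P.length = n ∧ P.sum = (j : ℤ) := by
  induction n generalizing j P with
  | zero =>
    cases j with
    | zero =>
      simp only [pths, Finset.mem_singleton, List.length_eq_zero_iff]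
      constructor
      · rintro rfl
        simp [Good]
      · exact fun h => h.2.1
    | succ j =>
      simp only [pths, Finset.notMem_empty, List.length_eq_zero_iff, false_iff]
      rintro ⟨_, rfl, h⟩
      simp at h
      omega
  | succ n ih =>
    rcases List.eq_nil_or_concat P with rfl | ⟨Q, s, rfl⟩
    · cases j with
      | zero => simp [pths]
      | succ j => simp [pths]; split_ifs <;> simp
    · have hone : ∀ (R : List ℤ) (t : ℤ), R ++ [t] = Q ++ [s] ↔ R = Q ∧ t = s := by
        intro R t
        simp [List.append_eq_append_iff_of_size_eq_right]
      rw [List.concat_eq_append, good_concat]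
      cases j with
      | zero =>
        simp only [pths, Finset.mem_image, hone, ih, List.length_append, List.length_singleton,
          List.sum_append, List.sum_singleton]
        constructor
        · rintro ⟨R, ⟨h1, h2, h3⟩, rfl, rfl⟩
          push_cast at h3 ⊢
          exact ⟨⟨h1, by simp, by omega, by omega⟩, by omega, by omega⟩
        · rintro ⟨⟨h1, h2, h3, h4⟩, h5, h6⟩
          have h7 := (h1.2 Q.length).1
          rw [List.take_length] at h7
          push_cast at h6
          refine ⟨Q, ⟨h1, by omega, by push_cast; omega⟩, rfl, by omega⟩
      | succ j =>
        simp only [pths]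
        split_ifs with hj
        · simp only [Finset.mem_union, Finset.mem_image, hone, ih, List.length_append,
            List.length_singleton, List.sum_append, List.sum_singleton]
          constructor
          · rintro (⟨R, ⟨h1, h2, h3⟩, rfl, rfl⟩ | ⟨R, ⟨h1, h2, h3⟩, rfl, rfl⟩) <;>
            · push_cast at h3 ⊢
              exact ⟨⟨h1, by simp, by omega, by omega⟩, by omega, by omega⟩
          · rintro ⟨⟨h1, h2, h3, h4⟩, h5, h6⟩
            push_cast at h6
            rcases h2 with h2 | h2
            · exact Or.inl ⟨Q, ⟨h1, by omega, by omega⟩, rfl, h2.symm⟩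
            · exact Or.inr ⟨Q, ⟨h1, by omega, by push_cast; omega⟩, rfl, h2.symm⟩
        · simp only [Finset.notMem_empty, false_iff, List.sum_append, List.sum_singleton]
          rintro ⟨⟨h1, h2, h3, h4⟩, h5, h6⟩
          push_cast at h6
          omega

lemma inj_app (s : ℤ) : Function.Injective (fun P : List ℤ => P ++ [s]) :=
  fun a b h => by simpa using h

lemma card_zero (h n : ℕ) : (pths h (n + 1) 0).card = (pths h n 1).card := by
  rw [pths, Finset.card_image_of_injective _ (inj_app _)]

lemma card_succ (h n j : ℕ) (hj : j + 1 ≤ h) :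
    (pths h (n + 1) (j + 1)).card = (pths h n j).card + (pths h n (j + 2)).card := by
  rw [pths, if_pos hj, Finset.card_union_of_disjoint,
    Finset.card_image_of_injective _ (inj_app _), Finset.card_image_of_injective _ (inj_app _)]
  rw [Finset.disjoint_left]
  intro P h1 h2
  simp only [Finset.mem_image] at h1 h2
  obtain ⟨a, _, rfl⟩ := h1
  obtain ⟨b, _, hb⟩ := h2
  have := congrArg List.getLast? hb
  simp at this

lemma card_big (h n j : ℕ) (hj : h < j) : (pths h n j) = ∅ := by
  cases j with
  | zero => omega
  | succ j => cases n with
    | zero => rfl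
    | succ n => rw [pths, if_neg (by omega)]

noncomputable def WS (h j : ℕ) : PowerSeries ℚ :=
  PowerSeries.mk fun n => ((pths h n j).card : ℚ)

lemma WS_zero (h : ℕ) : WS h 0 = 1 + PowerSeries.X * WS h 1 := by
  ext n
  cases n with
  | zero => simp [WS, pths]
  | succ n =>
    rw [map_add, PowerSeries.coeff_succ_X_mul]
    simp [WS, card_zero, PowerSeries.coeff_one]

lemma WS_succ (h j : ℕ) (hj : j + 1 ≤ h) :
    WS h (j + 1) = PowerSeries.X * (WS h j + WS h (j + 2)) := by
  ext n
  cases n with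
  | zero => simp [WS, pths]
  | succ n =>
    rw [PowerSeries.coeff_succ_X_mul]
    simp [WS, card_succ h n j hj]

lemma WS_big (h j : ℕ) (hj : h < j) : WS h j = 0 := by
  ext n
  simp [WS, card_big h n j hj]

noncomputable def zS : PowerSeries ℚ := PowerSeries.X * cS

lemma zS_sq : zS ^ 2 = qS := by unfold zS qS; ring

lemma WS_step (h m j : ℕ) (hm : j + m = h) :
    (1 - qS ^ (m + 1)) * WS h (j + 1) = zS * (1 - qS ^ m) * WS h j := by
  induction m generalizing j with
  | zero => rw [WS_big h (j + 1) (by omega)]; simp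
  | succ m ih =>
    have h1 := ih (j + 1) (by omega)
    have h2 := WS_succ h j (by omega)
    have hz := zS_sq
    have hc := cS_q
    have hzz : zS = PowerSeries.X * cS := rfl
    linear_combination zS * h1 + (1 - qS ^ (m + 1)) * cS * h2
      - (1 - qS ^ (m + 1)) * WS h (j + 1) * hc - (1 - qS ^ (m + 1)) * (WS h j + WS h (j + 2)) * hzz
      + (1 - qS ^ m) * WS h (j + 1) * hz

lemma WS_zero_eq (h : ℕ) : (1 - qS ^ (h + 2)) * WS h 0 = cS * (1 - qS ^ (h + 1)) := by
  have h1 := WS_step h h 0 (by omega)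
  have h2 := WS_zero h
  have hz := zS_sq
  have hc := cS_q
  have hzz : zS = PowerSeries.X * cS := rfl
  rw [zero_add] at h1
  linear_combination zS * h1 + (1 - qS ^ (h + 1)) * cS * h2
      - (1 - qS ^ (h + 1)) * WS h 0 * hc - (1 - qS ^ (h + 1)) * (WS h 1) * hzz
      + (1 - qS ^ h) * WS h 0 * hz

lemma WS_eq (h j m : ℕ) (hm : j + m = h + 1) :
    (1 - qS ^ (h + 2)) * WS h j = zS ^ j * cS * (1 - qS ^ m) := by
  induction j generalizing m with
  | zero =>
    obtain rfl : m = h + 1 := by omega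
    rw [WS_zero_eq]; ring
  | succ j ih =>
    have h1 := ih (m + 1) (by omega)
    have h2 := WS_step h m j (by omega)
    apply mul_left_cancel₀ (one_sub_ne (m + 1) (by omega))
    linear_combination (1 - qS ^ (h + 2)) * h2 + zS * (1 - qS ^ m) * h1

noncomputable def ES (h j : ℕ) : PowerSeries ℚ := WS (h + 1) j - WS h j

lemma ES_eq (h j m : ℕ) (hm : j + m = h + 1) :
    ES h j = zS ^ j * cS * (1 - qS) * qS ^ m * (1 - qS ^ (j + 1)) * (eS (h + 2) * eS (h + 3)) := by
  have h1 := WS_eq h j m hm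
  have h2 := WS_eq (h + 1) j (m + 1) (by omega)
  have e1 := eS_mul (h + 2) (by omega)
  have e2 := eS_mul (h + 3) (by omega)
  have hE : (eS (h + 2) * eS (h + 3)) * ((1 - qS ^ (h + 2)) * (1 - qS ^ (h + 3))) = 1 := by
    linear_combination eS (h + 3) * (1 - qS ^ (h + 3)) * e1 + e2
  rw [show h + 1 + 2 = h + 3 by ring] at h2
  have hp : qS ^ m * qS ^ (j + 1) = qS ^ (h + 2) := by
    rw [← pow_add]; congr 1; omega
  unfold ES
  apply mul_left_cancel₀ (mul_ne_zero (one_sub_ne (h + 2) (by omega)) (one_sub_ne (h + 3) (by omega)))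
  linear_combination (1 - qS ^ (h + 2)) * h2 - (1 - qS ^ (h + 3)) * h1
    - zS ^ j * cS * (1 - qS) * qS ^ m * (1 - qS ^ (j + 1)) * hE
    + zS ^ j * cS * (1 - qS) * hp

lemma ES_prod (k : ℕ) :
    PowerSeries.X * (ES (k + 5) 4 * (ES (k + 3) 3 * ES (k + 1) 2)) = tS k := by
  rw [ES_eq (k + 5) 4 (k + 2) (by omega), ES_eq (k + 3) 3 (k + 1) (by omega),
    ES_eq (k + 1) 2 k (by omega)]
  have hz : PowerSeries.X * zS ^ 9 * cS ^ 3 = qS ^ 5 * (1 + qS) ^ 2 := by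
    rw [← cS_q]
    unfold zS qS
    ring
  unfold tS
  simp only [show k + 5 + 2 = k + 7 by ring, show k + 5 + 3 = k + 8 by ring,
    show k + 3 + 2 = k + 5 by ring, show k + 3 + 3 = k + 6 by ring,
    show k + 1 + 2 = k + 3 by ring, show k + 1 + 3 = k + 4 by ring]
  linear_combination (qS ^ (3 * k + 3) * (1 - qS) ^ 3 * (1 - qS ^ 3) * (1 - qS ^ 4) * (1 - qS ^ 5)
    * (eS (k + 3) * eS (k + 4) * eS (k + 5) * eS (k + 6) * eS (k + 7) * eS (k + 8))) * hz

def EF (h n j : ℕ) : Finset (List ℤ) := pths (h + 1) n j \ pths h n j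

lemma mem_EF (h n j : ℕ) (P : List ℤ) : P ∈ EF h n j ↔
    IsBallot P ∧ P.length = n ∧ P.sum = (j : ℤ) ∧ pathHeight P = (h : ℤ) + 1 := by
  unfold EF
  rw [Finset.mem_sdiff, mem_pths, mem_pths, good_iff, good_iff]
  push_cast
  constructor
  · rintro ⟨⟨⟨a, b⟩, c, d⟩, e⟩
    refine ⟨a, c, d, ?_⟩
    by_contra hne
    exact e ⟨⟨a, by omega⟩, c, d⟩
  · rintro ⟨a, c, d, b⟩
    exact ⟨⟨⟨a, by omega⟩, c, d⟩, fun e => by have := e.1.2; omega⟩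

lemma card_EF (h n j : ℕ) : ((EF h n j).card : ℚ) = PowerSeries.coeff n (ES h j) := by
  have hsub : pths h n j ⊆ pths (h + 1) n j := by
    intro P hP
    rw [mem_pths, good_iff] at *
    refine ⟨⟨hP.1.1, ?_⟩, hP.2⟩
    have := hP.1.2
    push_cast
    omega
  unfold EF ES WS
  rw [Finset.card_sdiff_of_subset hsub, Nat.cast_sub (Finset.card_le_card hsub)]
  simp

lemma A_eq (j n : ℕ) : (A j n : ℚ) = PowerSeries.coeff (2 * n) (WS j 0) := by
  unfold A WS
  rw [PowerSeries.coeff_mk, ← Nat.card_eq_finsetCard]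
  congr 1
  apply Nat.card_congr
  apply Equiv.subtypeEquivRight
  intro P
  rw [mem_pths, good_iff]
  unfold IsDyck
  push_cast
  tauto

lemma N3_eq (n K : ℕ) (hn : 1 ≤ n) (hK : 2 * n ≤ K) :
    (N3 n : ℚ) = PowerSeries.coeff (2 * n) (∑ k ∈ Finset.range K, tS k) := by
  let S : Finset (List ℤ × List ℤ × List ℤ) := (Finset.range K).biUnion fun k =>
    (Finset.HasAntidiagonal.antidiagonal (2 * n - 1)).biUnion fun p =>
      (Finset.HasAntidiagonal.antidiagonal p.2).biUnion fun r =>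
        EF (k + 5) p.1 4 ×ˢ (EF (k + 3) r.1 3 ×ˢ EF (k + 1) r.2 2)
  have hS : N3 n = S.card := by
    unfold N3
    rw [← Nat.card_eq_finsetCard]
    apply Nat.card_congr
    apply Equiv.subtypeEquivRight
    rintro ⟨P, Q, R⟩
    simp only [S, Finset.mem_biUnion, Finset.mem_product, mem_EF, Finset.HasAntidiagonal.mem_antidiagonal,
      Finset.mem_range]
    push_cast
    constructor
    · rintro ⟨bP, bQ, bR, hl, sP, sQ, sR, h1, h2⟩
      have hR := sum_le_height' R
      have hP := height_le_length P bP
      refine ⟨(pathHeight P - 6).toNat, by omega, (P.length, Q.length + R.length), by simp; omega,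
        (Q.length, R.length), rfl, ⟨bP, rfl, sP, by omega⟩, ⟨bQ, rfl, sQ, by omega⟩,
        bR, rfl, sR, by omega⟩
    · rintro ⟨k, hk, ⟨a, d⟩, hp, ⟨b, c⟩, hr, ⟨bP, lP, sP, hP⟩, ⟨bQ, lQ, sQ, hQ⟩, bR, lR, sR, hR⟩
      simp only at hp hr lP lQ lR
      exact ⟨bP, bQ, bR, by omega, sP, sQ, sR, by omega, by omega⟩
  rw [hS, Finset.card_biUnion, map_sum]
  · push_cast
    apply Finset.sum_congr rfl
    intro k _
    rw [← ES_prod, show 2 * n = (2 * n - 1) + 1 by omega, PowerSeries.coeff_succ_X_mul,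
      PowerSeries.coeff_mul, Finset.card_biUnion]
    · push_cast
      apply Finset.sum_congr (by simp)
      intro p _
      rw [PowerSeries.coeff_mul, Finset.card_biUnion]
      · push_cast
        rw [Finset.mul_sum]
        apply Finset.sum_congr rfl
        intro r _
        rw [Finset.card_product, Finset.card_product]
        push_cast
        rw [card_EF, card_EF, card_EF]
      · rintro ⟨b, c⟩ _ ⟨b', c'⟩ _ hne
        rw [Function.onFun, Finset.disjoint_left]
        rintro ⟨P, Q, R⟩ h1 h2
        simp only [Finset.mem_product, mem_EF] at h1 h2
        apply hne
        rw [← h1.2.1.2.1, ← h1.2.2.2.1, ← h2.2.1.2.1, ← h2.2.2.2.1]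
    · rintro ⟨a, d⟩ ha ⟨a', d'⟩ ha' hne
      rw [Function.onFun, Finset.disjoint_left]
      rintro ⟨P, Q, R⟩ h1 h2
      simp only [Finset.mem_biUnion, Finset.mem_product, mem_EF] at h1 h2
      obtain ⟨r, _, h1⟩ := h1
      obtain ⟨r', _, h2⟩ := h2
      simp only [Finset.coe_sort_coe, Finset.mem_coe, Finset.HasAntidiagonal.mem_antidiagonal] at ha ha'
      apply hne
      have e1 := h1.1.2.1
      have e2 := h2.1.2.1
      rw [Prod.mk.injEq]
      omega
  · intro k _ k' _ hne
    rw [Function.onFun, Finset.disjoint_left]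
    rintro ⟨P, Q, R⟩ h1 h2
    simp only [Finset.mem_biUnion, Finset.mem_product, mem_EF] at h1 h2
    obtain ⟨p, _, r, _, h1⟩ := h1
    obtain ⟨p', _, r', _, h2⟩ := h2
    apply hne
    have e1 := h1.1.2.2.2
    have e2 := h2.1.2.2.2
    push_cast at e1 e2
    omega

theorem superCatalan_three_interpretation (n : ℕ) (hn : 1 ≤ n) :
    superCatalan 3 (n + 1) =
      (N3 n : ℚ) + 2 * (A 1 n : ℚ) + 2 * (A 2 n : ℚ) + (A 3 n : ℚ) + (A 5 n : ℚ) := by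
  have hW : ∀ h : ℕ, WS h 0 * (1 - qS ^ (h + 2)) = (1 + qS) * (1 - qS ^ (h + 1)) := by
    intro h
    rw [← cS_q, ← WS_zero_eq]
    ring
  have hd := series_dvd (2 * n + 1) (WS 1 0) (WS 2 0) (WS 3 0) (WS 5 0) (hW 1) (hW 2) (hW 3) (hW 5)
  have h0 := PowerSeries.X_pow_dvd_iff.1 hd (2 * n) (by omega)
  have e2 : (2 : PowerSeries ℚ) = PowerSeries.C 2 := (map_ofNat _ 2).symm
  have hone : PowerSeries.coeff (2 * n) (1 : PowerSeries ℚ) = 0 := by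
    rw [PowerSeries.coeff_one, if_neg (by omega)]
  rw [map_sub, ← N3_eq n _ hn (by omega), map_sub, map_sub, map_sub, map_sub, map_add, hone,
    coeff_G, e2, PowerSeries.coeff_C_mul, PowerSeries.coeff_C_mul, ← A_eq, ← A_eq, ← A_eq,
    ← A_eq] at h0
  linarith
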